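/- arXiv:1012.2071 — 2 statements merged into one kernel-verified Lean document; each statement's English description precedes it below -/
import Mathlib

section
/- Let m be a positive integer and Θ a real 1×m matrix (a row of m real numbers). Then β(ᵗΘ) ≥ (β_×(Θ) − m) / ((m−1)·β_×(Θ) + m), where if β_×(Θ) = +∞ the right-hand side is interpreted as 1/(m−1) when m ≥ 2 and as +∞ when m = 1. -/
open MeasureTheory Filter Matrix

noncomputable section

/-- Geometric mean of the absolute values of the coordinates: Π(z). -/
def Pigeo {k : ℕ} (z : Fin k → ℝ) : ℝ := (∏ i, |z i|) ^ ((1:ℝ)/k)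

/-- Geometric mean of `max 1 |z i|`: Π'(z). -/
def Pigeo' {k : ℕ} (z : Fin k → ℝ) : ℝ := (∏ i, max 1 |z i|) ^ ((1:ℝ)/k)

/-- Coordinatewise cast of an integer vector to a real vector. -/
def ivec {k : ℕ} (x : Fin k → ℤ) : Fin k → ℝ := fun i => (x i : ℝ)

/-- The constant Δ_d = (2^{d-1}√d)⁻¹ · vol_{d-1}{x ∈ [-1,1]^d : x₁+⋯+x_d = 0}. -/
def Delta (d : ℕ) : ℝ :=
  ((2:ℝ) ^ (d - 1) * Real.sqrt d)⁻¹ *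
    (μH[(d:ℝ) - 1] {x : EuclideanSpace ℝ (Fin d) | (∀ i, |x i| ≤ 1) ∧ ∑ i, x i = 0}).toReal

/-- There are infinitely many pairs x ∈ ℤ^m \ {0}, y ∈ ℤ^n with Π(Θx − y) ≤ Π'(x)^{−γ}. -/
def MultApprox (n m : ℕ) (Θ : Matrix (Fin n) (Fin m) ℝ) (γ : ℝ) : Prop :=
  {p : (Fin m → ℤ) × (Fin n → ℤ) | p.1 ≠ 0 ∧
    Pigeo (Θ.mulVec (ivec p.1) - ivec p.2) ≤ Pigeo' (ivec p.1) ^ (-γ)}.Infinite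

/-- The multiplicative Diophantine exponent β_×(Θ), as an extended real number. -/
def mbeta (n m : ℕ) (Θ : Matrix (Fin n) (Fin m) ℝ) : EReal :=
  sSup {x : EReal | ∃ γ : ℝ, x = (γ : EReal) ∧ MultApprox n m Θ γ}

/-- There are infinitely many pairs x ∈ ℤ^m, y ∈ ℤ^n with |Θx − y|_∞ ≤ |x|_∞^{−γ}. -/
def OrdApprox (n m : ℕ) (Θ : Matrix (Fin n) (Fin m) ℝ) (γ : ℝ) : Prop :=
  {p : (Fin m → ℤ) × (Fin n → ℤ) |
    ‖Θ.mulVec (ivec p.1) - ivec p.2‖ ≤ ‖ivec p.1‖ ^ (-γ)}.Infinite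

/-- The ordinary Diophantine exponent β(Θ), as an extended real number. -/
def obeta (n m : ℕ) (Θ : Matrix (Fin n) (Fin m) ℝ) : EReal :=
  sSup {x : EReal | ∃ γ : ℝ, x = (γ : EReal) ∧ OrdApprox n m Θ γ}

/-!
Write `θ` for the row of `Θ`, let `(x, y)` satisfy `|θ · x - y| ≤ δ` with `x j ≠ 0`, and put
`L = (δ ∏ max(1, |x i|)) ^ (1/m)`. The `m + 1` linear forms `p i - q θ i` (`i ≠ j`), `q` and
`x · p - q y` in the unknowns `(q, p)` have determinant `± x j`, so Minkowski's theorem gives a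
nonzero integer point at which they are bounded by `L / max(1, |x i|)`, `2 L / δ` and `1`. The last
form is integer-valued and hence vanishes; on that hyperplane
`∑ (q θ i - p i) x i = q (θ · x - y)`, which controls the missing difference `q θ j - p j` as well.

With `P = Π'(x)` and `δ = P ^ (-γ)` this reads `|q| ≪ P ^ (γ - (γ/m - 1))` and
`|q θ - p| ≪ P ^ (-(γ/m - 1))`, an approximation of exponent
`(γ/m - 1) / (γ - (γ/m - 1)) = (γ - m) / ((m - 1) γ + m)`. Now let `γ` tend to `β_×(Θ)`.
-/

open scoped Topology

section GeometryOfNumbers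

variable {ι : Type*} [Fintype ι]

theorem exists_ne_zero_intCast_mem_of_two_pow_lt_volume {s : Set (ι → ℝ)}
    (hsymm : ∀ v ∈ s, -v ∈ s) (hconv : Convex ℝ s) (hvol : 2 ^ Fintype.card ι < volume s) :
    ∃ z : ι → ℤ, z ≠ 0 ∧ (fun i => (z i : ℝ)) ∈ s := by
  let b := Pi.basisFun ℝ ι
  have : Countable (Submodule.span ℤ (Set.range b)).toAddSubgroup :=
    inferInstanceAs (Countable (Submodule.span ℤ (Set.range b)))
  have hcovol : volume (ZSpan.fundamentalDomain b) = 1 := by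
    simp [b, ZSpan.fundamentalDomain_pi_basisFun, volume_pi]
  obtain ⟨v, hv0, hvs⟩ := exists_ne_zero_mem_lattice_of_measure_mul_two_pow_lt_measure
    (ZSpan.isAddFundamentalDomain' b volume) hsymm hconv
    (by rwa [hcovol, one_mul, Module.finrank_fintype_fun_eq_card])
  choose z hz using (b.mem_span_iff_repr_mem ℤ (v : ι → ℝ)).1 v.2
  have hzv : (fun i => (z i : ℝ)) = v := funext hz
  refine ⟨z, ?_, hzv ▸ hvs⟩
  rintro rfl
  exact hv0 (Subtype.ext (by simp [← hzv, Pi.zero_def]))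

theorem volume_preimage_toLin'_pi_Ioo_neg [DecidableEq ι] {A : Matrix ι ι ℝ} (hA : A.det ≠ 0)
    {c : ι → ℝ} (hc : ∀ i, 0 ≤ c i) :
    volume (toLin' A ⁻¹' Set.univ.pi fun i => Set.Ioo (-c i) (c i)) =
      2 ^ Fintype.card ι * ENNReal.ofReal ((∏ i, c i) / |A.det|) := by
  have hbox : volume (Set.univ.pi fun i => Set.Ioo (-c i) (c i)) =
      2 ^ Fintype.card ι * ENNReal.ofReal (∏ i, c i) := by
    simp [Real.volume_pi_Ioo, ← two_mul, ENNReal.ofReal_mul, Finset.prod_mul_distrib,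
      ENNReal.ofReal_prod_of_nonneg fun i _ => hc i]
  rw [Measure.addHaar_preimage_linearMap _ (by rwa [LinearMap.det_toLin']), LinearMap.det_toLin',
    hbox, mul_left_comm, ← ENNReal.ofReal_mul (abs_nonneg _), abs_inv, inv_mul_eq_div]

theorem exists_int_abs_mulVec_lt [DecidableEq ι] {A : Matrix ι ι ℝ} (hA : A.det ≠ 0) {c : ι → ℝ}
    (hc : ∀ i, 0 ≤ c i) (h : |A.det| < ∏ i, c i) :
    ∃ z : ι → ℤ, z ≠ 0 ∧ ∀ i, |(A *ᵥ fun j => (z j : ℝ)) i| < c i := by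
  have hconv : Convex ℝ (toLin' A ⁻¹' Set.univ.pi fun i => Set.Ioo (-c i) (c i)) :=
    (convex_pi fun i _ => convex_Ioo (-c i) (c i)).linear_preimage (toLin' A)
  have hvol : 2 ^ Fintype.card ι <
      volume (toLin' A ⁻¹' Set.univ.pi fun i => Set.Ioo (-c i) (c i)) := by
    have h1 : 1 < ENNReal.ofReal ((∏ i, c i) / |A.det|) := by
      rwa [ENNReal.one_lt_ofReal, one_lt_div (abs_pos.2 hA)]
    rw [volume_preimage_toLin'_pi_Ioo_neg hA hc]
    simpa using ENNReal.mul_lt_mul_right (a := 2 ^ Fintype.card ι) (by simp) (by simp) h1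
  obtain ⟨z, hz0, hz⟩ := exists_ne_zero_intCast_mem_of_two_pow_lt_volume
    (fun v hv i _ => by simpa [mulVec_neg, neg_lt, and_comm] using hv i trivial) hconv hvol
  exact ⟨z, hz0, fun i => abs_lt.2 (by simpa using hz i trivial)⟩

end GeometryOfNumbers

section Transference

variable {ι : Type*} [Fintype ι]

theorem exists_int_dotProduct_eq_mul_abs_lt [DecidableEq ι] (θ : ι → ℝ) (x : ι → ℤ) (y : ℤ) {j : ι}
    (hxj : x j ≠ 0) {Q : ℝ} (hQ : 0 ≤ Q) {c : ι → ℝ} (hc : ∀ i, 0 ≤ c i)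
    (h : |(x j : ℝ)| < Q * ∏ i ∈ Finset.univ \ {j}, c i) :
    ∃ (q : ℤ) (p : ι → ℤ), (q ≠ 0 ∨ p ≠ 0) ∧ x ⬝ᵥ p = q * y ∧ |(q : ℝ)| < Q ∧
      ∀ i ≠ j, |q * θ i - p i| < c i := by
  -- Row `j` carries the form `x ⬝ᵥ p - q * y`, whose values are integers, so that being less than
  -- `1` forces it to vanish.
  let U : Matrix ι ι ℝ := updateRow 1 j fun i => x i
  let A : Matrix (ι ⊕ Unit) (ι ⊕ Unit) ℝ :=
    fromBlocks U (replicateCol Unit (Function.update (-θ) j (-y))) 0 1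
  have hdet : A.det = x j := by
    rw [det_fromBlocks_zero₂₁, det_one, mul_one, ← cramer_transpose_apply, transpose_one,
      cramer_one, Module.End.one_apply]
  obtain ⟨z, hz0, hz⟩ := exists_int_abs_mulVec_lt (A := A) (by simpa [hdet] using hxj)
    (c := Sum.elim (Function.update c j 1) fun _ => Q)
    (by
      rintro (i | -)
      · rcases eq_or_ne i j with rfl | hij
        · simp
        · simpa [hij] using hc i
      · exact hQ)
    (by
      rw [hdet, Fintype.prod_sum_type, mul_comm]
      simpa [Finset.prod_update_of_mem] using h)
  set q := z (.inr ())
  set p := fun i => z (.inl i)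
  have hj : |((x ⬝ᵥ p - q * y : ℤ) : ℝ)| < 1 := by
    simpa [A, U, fromBlocks_mulVec, mulVec, dotProduct, q, p, ← sub_eq_add_neg, mul_comm]
      using hz (.inl j)
  have hi : ∀ i ≠ j, |q * θ i - p i| < c i := fun i hij => by
    rw [abs_sub_comm]
    simpa [A, U, mulVec, dotProduct, one_apply, q, p, hij, ← sub_eq_add_neg, mul_comm]
      using hz (.inl i)
  refine ⟨q, p, ?_, ?_, ?_, hi⟩
  · contrapose! hz0
    ext (i | _)
    exacts [congrFun hz0.2 i, hz0.1]
  · exact sub_eq_zero.1 (Int.abs_lt_one_iff.1 (by exact_mod_cast hj))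
  · simpa [A, mulVec, dotProduct, q] using hz (.inr ())

theorem abs_le_abs_sum_add_card_sub_one_mul {a : ι → ℝ} {L : ℝ} {j : ι}
    (ha : ∀ i ≠ j, |a i| ≤ L) : |a j| ≤ |∑ i, a i| + (Fintype.card ι - 1) * L := by
  classical
  have hrest : |∑ i ∈ Finset.univ.erase j, a i| ≤ (Fintype.card ι - 1) * L := by
    have : (Finset.univ.erase j).card • L = (Fintype.card ι - 1) * L := by
      rw [Finset.card_erase_of_mem (Finset.mem_univ j), nsmul_eq_mul, Finset.card_univ,
        Nat.cast_pred (Fintype.card_pos_iff.2 ⟨j⟩)]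
    exact this ▸ (Finset.abs_sum_le_sum_abs _ _).trans
      (Finset.sum_le_card_nsmul _ _ _ fun i hi => ha i (Finset.ne_of_mem_erase hi))
  rw [← Finset.add_sum_erase _ a (Finset.mem_univ j)]
  linarith [abs_sub_abs_le_abs_add (a j) (∑ i ∈ Finset.univ.erase j, a i)]

theorem abs_lt_mul_prod_div_max_one [DecidableEq ι] (x : ι → ℝ) (j : ι) {δ L : ℝ} (hδ : 0 < δ)
    (hδL : δ * ∏ i, max 1 |x i| ≤ L ^ Fintype.card ι) :
    |x j| < 2 * L / δ * ∏ i ∈ Finset.univ \ {j}, L / max 1 |x i| := by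
  have hX : ∀ i, 0 < max 1 |x i| := fun i => by positivity
  have hprod : δ ≤ L / max 1 |x j| * ∏ i ∈ Finset.univ \ {j}, L / max 1 |x i| := by
    rw [← Finset.prod_eq_mul_prod_sdiff_singleton_of_mem (Finset.mem_univ j)
      (fun i => L / max 1 |x i|), Finset.prod_div_distrib, Finset.prod_const, Finset.card_univ,
      le_div_iff₀ (Finset.prod_pos fun i _ => hX i)]
    exact hδL
  calc |x j| < 2 * max 1 |x j| / δ * δ := by
        rw [div_mul_cancel₀ _ hδ.ne']
        linarith [le_max_right 1 |x j|, hX j]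
    _ ≤ 2 * max 1 |x j| / δ * (L / max 1 |x j| * ∏ i ∈ Finset.univ \ {j}, L / max 1 |x i|) := by
        gcongr
    _ = 2 * L / δ * ∏ i ∈ Finset.univ \ {j}, L / max 1 |x i| := by
        field_simp

theorem sum_mul_sub_mul_eq_mul_dotProduct_sub (θ : ι → ℝ) {x p : ι → ℤ} {q y : ℤ}
    (h : x ⬝ᵥ p = q * y) :
    ∑ i, (q * θ i - p i) * x i = q * (θ ⬝ᵥ (fun i => (x i : ℝ)) - y) := by
  have h' : ∑ i, (x i : ℝ) * p i = q * y := by exact_mod_cast h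
  simp_rw [sub_mul, Finset.sum_sub_distrib, mul_comm (p _ : ℝ), h', mul_assoc, ← Finset.mul_sum,
    mul_sub, dotProduct]

theorem ne_zero_of_forall_abs_mul_sub_lt_one {κ : Type*} {θ : κ → ℝ} {q : ℤ} {p : κ → ℤ}
    (hqp : q ≠ 0 ∨ p ≠ 0) (h : ∀ i, |q * θ i - p i| < 1) : q ≠ 0 := by
  rintro rfl
  refine hqp.resolve_left (by simp) (funext fun i => Int.abs_lt_one_iff.1 ?_)
  have hi := h i
  rw [Int.cast_zero, zero_mul, zero_sub, abs_neg] at hi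
  exact_mod_cast hi

theorem exists_int_abs_mul_sub_le_of_abs_dotProduct_sub_le (θ : ι → ℝ) {x : ι → ℤ} (hx : x ≠ 0)
    (y : ℤ) {δ L : ℝ} (hδ : 0 < δ) (h : |θ ⬝ᵥ (fun i => (x i : ℝ)) - y| ≤ δ) (hL : 0 < L)
    (hδL : δ * ∏ i, max 1 |(x i : ℝ)| ≤ L ^ Fintype.card ι) (hL1 : (Fintype.card ι + 1) * L < 1) :
    ∃ (q : ℤ) (p : ι → ℤ), q ≠ 0 ∧ |(q : ℝ)| * δ ≤ 2 * L ∧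
      ∀ i, |q * θ i - p i| ≤ (Fintype.card ι + 1) * L := by
  classical
  obtain ⟨j, hxj⟩ := Function.ne_iff.1 hx
  obtain ⟨q, p, hqp, hxp, hq, hp⟩ := exists_int_dotProduct_eq_mul_abs_lt θ x y hxj
    (by positivity) (fun i => by positivity)
    (abs_lt_mul_prod_div_max_one (fun i => (x i : ℝ)) j hδ hδL)
  have hqδ : |(q : ℝ)| * δ ≤ 2 * L := ((lt_div_iff₀ hδ).1 hq).le
  have hpx : ∀ i ≠ j, |(q * θ i - p i) * x i| ≤ L := fun i hij => by
    rw [abs_mul]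
    exact (mul_le_mul_of_nonneg_left (le_max_right 1 _) (abs_nonneg _)).trans
      ((le_div_iff₀ (by positivity)).1 (hp i hij).le)
  have hpj : |q * θ j - p j| ≤ (Fintype.card ι + 1) * L := by
    have hxj1 : 1 ≤ |(x j : ℝ)| := by exact_mod_cast Int.one_le_abs hxj
    calc |q * θ j - p j| ≤ |(q * θ j - p j) * x j| := by
          rw [abs_mul]
          exact le_mul_of_one_le_right (abs_nonneg _) hxj1
      _ ≤ |(q : ℝ)| * |θ ⬝ᵥ (fun i => (x i : ℝ)) - y| + (Fintype.card ι - 1) * L := by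
          rw [← abs_mul, ← sum_mul_sub_mul_eq_mul_dotProduct_sub θ hxp]
          exact abs_le_abs_sum_add_card_sub_one_mul hpx
      _ ≤ 2 * L + (Fintype.card ι - 1) * L := by
          linarith [mul_le_mul_of_nonneg_left h (abs_nonneg (q : ℝ))]
      _ = (Fintype.card ι + 1) * L := by ring
  have hp' : ∀ i, |q * θ i - p i| ≤ (Fintype.card ι + 1) * L := fun i => by
    rcases eq_or_ne i j with rfl | hij
    · exact hpj
    · exact ((hp i hij).le.trans (div_le_self hL.le (le_max_left _ _))).trans
        (le_mul_of_one_le_left hL.le (by simp))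
  exact ⟨q, p, ne_zero_of_forall_abs_mul_sub_lt_one hqp fun i => (hp' i).trans_lt hL1, hqδ, hp'⟩

end Transference

section IntegerVectors

variable {k n m : ℕ}

theorem norm_ivec (x : Fin k → ℤ) : ‖ivec x‖ = ‖x‖ := by
  simp only [Pi.norm_def, ivec, ← Int.norm_cast_real, nnnorm]

theorem ivec_zsmul (a : ℤ) (x : Fin k → ℤ) : ivec (a • x) = (a : ℝ) • ivec x := by
  ext i
  simp [ivec]

theorem tendsto_norm_ivec_cofinite : Tendsto (fun x : Fin k → ℤ => ‖ivec x‖) cofinite atTop := by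
  simp_rw [norm_ivec, ← cocompact_eq_cofinite]
  exact tendsto_norm_cocompact_atTop

theorem finite_setOf_norm_sub_ivec_le (v : Fin k → ℝ) (r : ℝ) :
    {y : Fin k → ℤ | ‖v - ivec y‖ ≤ r}.Finite := by
  refine (eventually_cofinite.1 (tendsto_norm_ivec_cofinite.eventually_gt_atTop (r + ‖v‖))).subset
    fun y hy => ?_
  have hy : ‖v - ivec y‖ ≤ r := hy
  simp only [Set.mem_ofPred_eq, not_lt]
  linarith [norm_sub_norm_le (ivec y) v, norm_sub_rev v (ivec y)]

theorem infinite_setOf_norm_mulVec_sub_ivec_le_one (hm : 0 < m) (Θ : Matrix (Fin n) (Fin m) ℝ) :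
    {p : (Fin m → ℤ) × (Fin n → ℤ) | p.1 ≠ 0 ∧ ‖Θ *ᵥ ivec p.1 - ivec p.2‖ ≤ 1}.Infinite := by
  have : Nonempty (Fin m) := ⟨⟨0, hm⟩⟩
  refine Set.infinite_of_injective_forall_mem
    (f := fun a : ℕ => (fun _ => (a : ℤ) + 1, fun i => round ((Θ *ᵥ ivec fun _ => a + 1) i)))
    (fun a b hab => ?_) fun a => ⟨fun h => ?_, ?_⟩
  · simpa using congrFun (Prod.ext_iff.1 hab).1 ⟨0, hm⟩
  · have : (a : ℤ) + 1 = 0 := congrFun h ⟨0, hm⟩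
    omega
  · refine (pi_norm_le_iff_of_nonneg one_pos.le).2 fun i => ?_
    exact (abs_sub_round _).trans (by norm_num)

end IntegerVectors

section GeometricMean

variable {k : ℕ}

theorem pigeo_le_one {z : Fin k → ℝ} (hz : ‖z‖ ≤ 1) : Pigeo z ≤ 1 :=
  Real.rpow_le_one (Finset.prod_nonneg fun _ _ => abs_nonneg _)
    (Finset.prod_le_one (fun _ _ => abs_nonneg _) fun i _ => (norm_le_pi_norm z i).trans hz)
    (by positivity)

theorem pigeo_fin_one (z : Fin 1 → ℝ) : Pigeo z = ‖z‖ := by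
  simp [Pigeo, Pi.norm_def]

theorem one_le_pigeo' (z : Fin k → ℝ) : 1 ≤ Pigeo' z :=
  Real.one_le_rpow (Finset.one_le_prod fun _ _ => le_max_left _ _) (by positivity)

theorem pigeo'_pow (hk : k ≠ 0) (z : Fin k → ℝ) : Pigeo' z ^ k = ∏ i, max 1 |z i| := by
  rw [Pigeo', one_div, Real.rpow_inv_natCast_pow (Finset.prod_nonneg fun _ _ => by positivity) hk]

theorem norm_le_prod_max_one_abs (z : Fin k → ℝ) : ‖z‖ ≤ ∏ i, max 1 |z i| := by
  refine (pi_norm_le_iff_of_nonneg (Finset.prod_nonneg fun _ _ => by positivity)).2 fun i => ?_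
  simpa only [max_comm, Real.norm_eq_abs] using
    Finset.le_prod_max_one (Finset.mem_univ i) fun i => |z i|

theorem tendsto_pigeo'_ivec_cofinite :
    Tendsto (fun x : Fin k → ℤ => Pigeo' (ivec x)) cofinite atTop := by
  rcases k.eq_zero_or_pos with rfl | hk
  · simp [Filter.cofinite_eq_bot]
  · exact (tendsto_rpow_atTop (by positivity)).comp
      (tendsto_atTop_mono (fun x => norm_le_prod_max_one_abs (ivec x)) tendsto_norm_ivec_cofinite)

end GeometricMean

section MultiplicativeExponent

variable {n m : ℕ} {γ : ℝ}

theorem MultApprox.anti {Θ : Matrix (Fin n) (Fin m) ℝ} {γ' : ℝ} (h : MultApprox n m Θ γ')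
    (hγ : γ ≤ γ') : MultApprox n m Θ γ :=
  Set.Infinite.mono (fun _ hp => ⟨hp.1, hp.2.trans <|
    Real.rpow_le_rpow_of_exponent_le (one_le_pigeo' _) (neg_le_neg hγ)⟩) h

theorem MultApprox.of_lt_mbeta {Θ : Matrix (Fin n) (Fin m) ℝ} (h : (γ : EReal) < mbeta n m Θ) :
    MultApprox n m Θ γ := by
  obtain ⟨_, ⟨γ', rfl, hγ'⟩, hlt⟩ := lt_sSup_iff.1 h
  exact hγ'.anti (EReal.coe_lt_coe_iff.1 hlt).le

theorem multApprox_zero (hm : 0 < m) (Θ : Matrix (Fin n) (Fin m) ℝ) : MultApprox n m Θ 0 :=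
  (infinite_setOf_norm_mulVec_sub_ivec_le_one hm Θ).mono fun _ hp =>
    ⟨hp.1, by simpa using pigeo_le_one hp.2⟩

theorem mbeta_nonneg (hm : 0 < m) (Θ : Matrix (Fin n) (Fin m) ℝ) : 0 ≤ mbeta n m Θ :=
  le_sSup ⟨0, rfl, multApprox_zero hm Θ⟩

theorem MultApprox.frequently_cofinite {Θ : Matrix (Fin 1) (Fin m) ℝ} (h : MultApprox 1 m Θ γ)
    (hγ : 0 ≤ γ) : ∃ᶠ x in cofinite, x ≠ 0 ∧
      ∃ y : Fin 1 → ℤ, ‖Θ *ᵥ ivec x - ivec y‖ ≤ Pigeo' (ivec x) ^ (-γ) := by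
  rw [frequently_cofinite_iff_infinite]
  intro hfin
  refine h (Set.Finite.of_finite_fibers Prod.fst (hfin.subset ?_) fun x _ => ?_)
  · rintro _ ⟨⟨x, y⟩, ⟨hx, hxy⟩, rfl⟩
    exact ⟨hx, y, by rwa [pigeo_fin_one] at hxy⟩
  · refine ((Set.finite_singleton x).prod
      (finite_setOf_norm_sub_ivec_le (Θ *ᵥ ivec x) 1)).subset ?_
    rintro ⟨x', y⟩ ⟨⟨-, hxy⟩, hxx'⟩
    obtain rfl : x' = x := hxx'
    rw [pigeo_fin_one] at hxy
    exact ⟨rfl, hxy.trans (Real.rpow_le_one_of_one_le_of_nonpos (one_le_pigeo' _) (by linarith))⟩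

end MultiplicativeExponent

theorem eventually_mul_rpow_neg_le_rpow_neg {a b g C : ℝ} (hC : 0 < C) (hgb : g * b < a) :
    ∀ᶠ P : ℝ in atTop, C * P ^ (-a) ≤ (C * P ^ b) ^ (-g) := by
  have hlim : Tendsto (fun P : ℝ => C * C ^ g * P ^ (-(a - g * b))) atTop (𝓝 0) := by
    simpa using (tendsto_rpow_neg_atTop (sub_pos.2 hgb)).const_mul (C * C ^ g)
  filter_upwards [hlim.eventually_le_const one_pos, eventually_gt_atTop 0] with P hP hP0
  rw [Real.rpow_neg (x := C * P ^ b) (by positivity), ← one_div, le_div_iff₀ (by positivity)]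
  calc C * P ^ (-a) * (C * P ^ b) ^ g = C * C ^ g * (P ^ (-a) * P ^ (g * b)) := by
        rw [Real.mul_rpow hC.le (by positivity), ← Real.rpow_mul hP0.le, mul_comm g]
        ring
    _ = C * C ^ g * P ^ (-(a - g * b)) := by
        rw [← Real.rpow_add hP0, neg_sub, sub_eq_neg_add]
    _ ≤ 1 := hP

section OrdinaryExponent

variable {n m : ℕ} {Θ : Matrix (Fin n) (Fin m) ℝ} {γ : ℝ}

theorem OrdApprox.le_obeta (h : OrdApprox n m Θ γ) : (γ : EReal) ≤ obeta n m Θ :=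
  le_sSup ⟨γ, rfl, h⟩

theorem obeta_nonneg (hm : 0 < m) (Θ : Matrix (Fin n) (Fin m) ℝ) : 0 ≤ obeta n m Θ :=
  OrdApprox.le_obeta (γ := 0) <| (infinite_setOf_norm_mulVec_sub_ivec_le_one hm Θ).mono fun _ hp =>
    by simpa using hp.2

theorem ordApprox_of_mulVec_eq {x : Fin m → ℤ} (hx : x ≠ 0) {y : Fin n → ℤ}
    (hxy : Θ *ᵥ ivec x = ivec y) : OrdApprox n m Θ γ := by
  refine Set.infinite_of_injective_forall_mem (f := fun a : ℤ => (a • x, a • y))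
    (fun a b hab => smul_left_injective ℤ hx (Prod.ext_iff.1 hab).1) fun a => ?_
  simp only [Set.mem_ofPred_eq, ivec_zsmul, mulVec_smul, hxy, sub_self, norm_zero]
  positivity

theorem ordApprox_of_forall_exists_norm_lt
    (H : ∀ ε > 0, ∃ (x : Fin m → ℤ) (y : Fin n → ℤ), x ≠ 0 ∧ ‖Θ *ᵥ ivec x - ivec y‖ < ε ∧
      ‖Θ *ᵥ ivec x - ivec y‖ ≤ ‖ivec x‖ ^ (-γ)) : OrdApprox n m Θ γ := by
  -- The errors of finitely many points form a closed set, so arbitrarily small ones include `0`;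
  -- but the multiples of an exact solution are already infinitely many.
  intro hfin
  let S : Set ℝ := (fun p : (Fin m → ℤ) × (Fin n → ℤ) => ‖Θ *ᵥ ivec p.1 - ivec p.2‖) ''
    {p | p.1 ≠ 0 ∧ ‖Θ *ᵥ ivec p.1 - ivec p.2‖ ≤ ‖ivec p.1‖ ^ (-γ)}
  have hS : IsClosed S := ((hfin.subset fun _ hp => hp.2).image _).isClosed
  have h0 : (0 : ℝ) ∈ S := by
    refine hS.closure_subset (Metric.mem_closure_iff.2 fun ε hε => ?_)
    obtain ⟨x, y, hx, hlt, hle⟩ := H ε hε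
    exact ⟨_, ⟨(x, y), ⟨hx, hle⟩, rfl⟩, by simpa using hlt⟩
  obtain ⟨⟨x, y⟩, ⟨hx, -⟩, hxy⟩ := h0
  exact ordApprox_of_mulVec_eq hx (sub_eq_zero.1 (norm_eq_zero.1 hxy)) hfin

theorem ordApprox_of_frequently {a b g C : ℝ} (hC : 0 < C) (ha : 0 < a) (hg : 0 ≤ g)
    (hgb : g * b < a)
    (H : ∃ᶠ P : ℝ in atTop, ∃ (x : Fin m → ℤ) (y : Fin n → ℤ), x ≠ 0 ∧
      ‖ivec x‖ ≤ C * P ^ b ∧ ‖Θ *ᵥ ivec x - ivec y‖ ≤ C * P ^ (-a)) : OrdApprox n m Θ g := by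
  refine ordApprox_of_forall_exists_norm_lt fun ε hε => ?_
  have hlim : Tendsto (fun P : ℝ => C * P ^ (-a)) atTop (𝓝 0) := by
    simpa using (tendsto_rpow_neg_atTop ha).const_mul C
  obtain ⟨P, ⟨x, y, hx, hxP, hxy⟩, hPε, hPg⟩ := (H.and_eventually
    ((hlim.eventually_lt_const hε).and (eventually_mul_rpow_neg_le_rpow_neg hC hgb))).exists
  have hx0 : 0 < ‖ivec x‖ := by rwa [norm_ivec, norm_pos_iff]
  exact ⟨x, y, hx, hxy.trans_lt hPε,
    (hxy.trans hPg).trans (Real.rpow_le_rpow_of_nonpos hx0 hxP (neg_nonpos.2 hg))⟩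

theorem div_le_obeta_of_frequently {a b C : ℝ} (hC : 0 < C) (ha : 0 < a) (hb : 0 < b)
    (H : ∃ᶠ P : ℝ in atTop, ∃ (x : Fin m → ℤ) (y : Fin n → ℤ), x ≠ 0 ∧
      ‖ivec x‖ ≤ C * P ^ b ∧ ‖Θ *ᵥ ivec x - ivec y‖ ≤ C * P ^ (-a)) :
    ((a / b : ℝ) : EReal) ≤ obeta n m Θ := by
  refine EReal.ge_of_forall_gt_iff_ge.1 fun g hg => ?_
  have hgab : max g 0 < a / b := max_lt (EReal.coe_lt_coe_iff.1 hg) (div_pos ha hb)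
  have happrox : OrdApprox n m Θ (max g 0) :=
    ordApprox_of_frequently hC ha (le_max_right g 0) ((lt_div_iff₀ hb).1 hgab) H
  exact (EReal.coe_le_coe_iff.2 (le_max_left g 0)).trans happrox.le_obeta

end OrdinaryExponent

section TransferBound

variable {m : ℕ}

/-- The exponent `(γ - m) / ((m - 1) γ + m)` that simultaneous approximations inherit from
approximations of multiplicative exponent `γ` to a linear form in `m` variables. -/
def transferBound (m : ℕ) (γ : ℝ) : ℝ := (γ - m) / ((m - 1) * γ + m)

theorem transferBound_denom_pos (hm : 0 < m) {γ : ℝ} (hγ : 0 ≤ γ) : 0 < (m - 1) * γ + m := by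
  have hm1 : (1 : ℝ) ≤ m := by exact_mod_cast hm
  exact add_pos_of_nonneg_of_pos (mul_nonneg (sub_nonneg.2 hm1) hγ) (by positivity)

theorem transferBound_nonpos (hm : 0 < m) {γ : ℝ} (hγ : 0 ≤ γ) (hγm : γ ≤ m) :
    transferBound m γ ≤ 0 :=
  div_nonpos_of_nonpos_of_nonneg (sub_nonpos.2 hγm) (transferBound_denom_pos hm hγ).le

theorem continuousAt_transferBound (hm : 0 < m) {γ : ℝ} (hγ : 0 ≤ γ) :
    ContinuousAt (transferBound m) γ :=
  ContinuousAt.div (by fun_prop) (by fun_prop) (transferBound_denom_pos hm hγ).ne'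

theorem transferBound_one (γ : ℝ) : transferBound 1 γ = γ - 1 := by
  simp [transferBound]

theorem tendsto_transferBound_atTop (hm : 2 ≤ m) :
    Tendsto (transferBound m) atTop (𝓝 (1 / ((m : ℝ) - 1))) := by
  have hm1 : (0 : ℝ) < m - 1 := sub_pos.2 (by exact_mod_cast hm)
  have hdenom : Tendsto (fun γ : ℝ => ((m : ℝ) - 1) * γ + m) atTop atTop :=
    tendsto_atTop_add_const_right _ _ (tendsto_id.const_mul_atTop hm1)
  have hlim : Tendsto (fun γ : ℝ => 1 / ((m : ℝ) - 1) - m ^ 2 / (m - 1) / ((m - 1) * γ + m)) atTop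
      (𝓝 (1 / ((m : ℝ) - 1))) := by
    simpa using (hdenom.const_div_atTop ((m : ℝ) ^ 2 / (m - 1))).const_sub (1 / ((m : ℝ) - 1))
  refine hlim.congr' ?_
  filter_upwards [hdenom.eventually_gt_atTop 0] with γ hγ
  rw [transferBound]
  field_simp
  ring

end TransferBound

section Transposition

variable {m : ℕ} {Θ : Matrix (Fin 1) (Fin m) ℝ} {γ : ℝ}

/-- The error exponent `γ / m - 1` comes from taking `L ^ m = δ * P ^ m` and `δ = P ^ (-γ)` in
`exists_int_abs_mul_sub_le_of_abs_dotProduct_sub_le`, where `P = Pigeo' (ivec x)`. -/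
theorem exists_transpose_approx (hm : 0 < m) {x : Fin m → ℤ} (hx : x ≠ 0) {y : Fin 1 → ℤ}
    (hxy : ‖Θ *ᵥ ivec x - ivec y‖ ≤ Pigeo' (ivec x) ^ (-γ))
    (hsmall : (m + 1) * Pigeo' (ivec x) ^ (-(γ / m - 1)) < 1) :
    ∃ (q : Fin 1 → ℤ) (p : Fin m → ℤ), q ≠ 0 ∧
      ‖ivec q‖ ≤ (m + 1) * Pigeo' (ivec x) ^ (γ - (γ / m - 1)) ∧
      ‖Θᵀ *ᵥ ivec q - ivec p‖ ≤ (m + 1) * Pigeo' (ivec x) ^ (-(γ / m - 1)) := by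
  have hP : 0 < Pigeo' (ivec x) := one_pos.trans_le (one_le_pigeo' _)
  have hm1 : (1 : ℝ) ≤ m := by exact_mod_cast hm
  have hprod : Pigeo' (ivec x) ^ (-γ) * ∏ i, max 1 |(x i : ℝ)| =
      (Pigeo' (ivec x) ^ (-(γ / m - 1))) ^ Fintype.card (Fin m) := by
    rw [show ∏ i, max 1 |(x i : ℝ)| = Pigeo' (ivec x) ^ m from (pigeo'_pow hm.ne' _).symm,
      Fintype.card_fin, ← Real.rpow_natCast, ← Real.rpow_natCast, ← Real.rpow_mul hP.le,
      ← Real.rpow_add hP]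
    congr 1
    field_simp
    ring
  have hform : |Θ 0 ⬝ᵥ (fun i => (x i : ℝ)) - y 0| ≤ Pigeo' (ivec x) ^ (-γ) :=
    (norm_le_pi_norm (Θ *ᵥ ivec x - ivec y) 0).trans hxy
  obtain ⟨q, p, hq0, hq, hp⟩ := exists_int_abs_mul_sub_le_of_abs_dotProduct_sub_le (Θ 0) hx (y 0)
    (by positivity) hform (by positivity) hprod.le (by simpa using hsmall)
  refine ⟨fun _ => q, p, fun h => hq0 (congrFun h 0), ?_, ?_⟩
  · calc ‖ivec fun _ : Fin 1 => q‖ = |(q : ℝ)| := by simp [ivec, Pi.norm_def]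
      _ ≤ 2 * Pigeo' (ivec x) ^ (-(γ / m - 1)) / Pigeo' (ivec x) ^ (-γ) :=
          (le_div_iff₀ (by positivity)).2 hq
      _ = 2 * Pigeo' (ivec x) ^ (γ - (γ / m - 1)) := by
          rw [mul_div_assoc, ← Real.rpow_sub hP]
          congr 2
          ring
      _ ≤ (m + 1) * Pigeo' (ivec x) ^ (γ - (γ / m - 1)) := by
          gcongr
          linarith
  · refine (pi_norm_le_iff_of_nonneg (by positivity)).2 fun i => ?_
    simpa [mulVec, dotProduct, ivec, mul_comm] using hp i

theorem MultApprox.transferBound_le_obeta_transpose (hm : 0 < m) (hγ : m < γ)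
    (h : MultApprox 1 m Θ γ) : (transferBound m γ : EReal) ≤ obeta m 1 Θᵀ := by
  have hm0 : (0 : ℝ) < m := by exact_mod_cast hm
  have hγ0 : 0 < γ := hm0.trans hγ
  have ha : 0 < γ / m - 1 := by rwa [sub_pos, one_lt_div hm0]
  have hb : γ - (γ / m - 1) = ((m - 1) * γ + m) / m := by field_simp; ring
  have hb0 : 0 < γ - (γ / m - 1) := hb ▸ div_pos (transferBound_denom_pos hm hγ0.le) hm0
  have hab : transferBound m γ = (γ / m - 1) / (γ - (γ / m - 1)) := by
    rw [hb, transferBound, div_sub_one hm0.ne', div_div_div_cancel_right₀ hm0.ne']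
  have hlim : Tendsto (fun P : ℝ => (m + 1) * P ^ (-(γ / m - 1))) atTop (𝓝 0) := by
    simpa using (tendsto_rpow_neg_atTop ha).const_mul ((m : ℝ) + 1)
  rw [hab]
  refine div_le_obeta_of_frequently (C := m + 1) (by positivity) ha hb0
    (tendsto_pigeo'_ivec_cofinite.frequently (((h.frequently_cofinite hγ0.le).and_eventually
      (tendsto_pigeo'_ivec_cofinite.eventually (hlim.eventually_lt_const one_pos))).mono ?_))
  rintro x ⟨⟨hx, y, hxy⟩, hsmall⟩
  exact exists_transpose_approx hm hx hxy hsmall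

theorem le_obeta_transpose_of_tendsto (hm : 0 < m) {l : Filter ℝ} [l.NeBot] {c : EReal}
    (hmβ : ∀ᶠ γ : ℝ in l, m < γ ∧ (γ : EReal) < mbeta 1 m Θ)
    (hc : Tendsto (fun γ => (transferBound m γ : EReal)) l (𝓝 c)) : c ≤ obeta m 1 Θᵀ :=
  le_of_tendsto hc <| hmβ.mono fun _ hγ =>
    (MultApprox.of_lt_mbeta hγ.2).transferBound_le_obeta_transpose hm hγ.1

theorem transferBound_mbeta_le_obeta_transpose (hm : 0 < m) (htop : mbeta 1 m Θ ≠ ⊤) :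
    (transferBound m (mbeta 1 m Θ).toReal : EReal) ≤ obeta m 1 Θᵀ := by
  have hβ : ((mbeta 1 m Θ).toReal : EReal) = mbeta 1 m Θ :=
    EReal.coe_toReal htop (EReal.bot_lt_zero.trans_le (mbeta_nonneg hm Θ)).ne'
  have hβ0 : 0 ≤ (mbeta 1 m Θ).toReal := EReal.toReal_nonneg (mbeta_nonneg hm Θ)
  rcases le_or_gt (mbeta 1 m Θ).toReal m with hβm | hβm
  · exact (EReal.coe_nonpos.2 (transferBound_nonpos hm hβ0 hβm)).trans (obeta_nonneg one_pos Θᵀ)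
  · refine le_obeta_transpose_of_tendsto (l := 𝓝[<] (mbeta 1 m Θ).toReal) hm ?_
      ((continuous_coe_real_ereal.tendsto _).comp
        ((continuousAt_transferBound hm hβ0).tendsto.mono_left nhdsWithin_le_nhds))
    filter_upwards [Ioo_mem_nhdsLT hβm] with γ hγ
    exact ⟨hγ.1, by rw [← hβ]; exact EReal.coe_lt_coe hγ.2⟩

theorem eventually_lt_and_lt_mbeta_of_eq_top (htop : mbeta 1 m Θ = ⊤) :
    ∀ᶠ γ : ℝ in atTop, m < γ ∧ (γ : EReal) < mbeta 1 m Θ := by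
  filter_upwards [eventually_gt_atTop (m : ℝ)] with γ hγ
  exact ⟨hγ, htop ▸ EReal.coe_lt_top γ⟩

end Transposition

/-- Corollary 3: for n = 1, β(ᵗΘ) ≥ (β_×(Θ) − m)/((m−1) β_×(Θ) + m), where for
β_×(Θ) = +∞ the right-hand side is read as 1/(m−1) if m ≥ 2, and as +∞ if m = 1. -/
theorem obeta_transpose_ge_of_mbeta (m : ℕ) (hm : 0 < m)
    (Θ : Matrix (Fin 1) (Fin m) ℝ) :
    (mbeta 1 m Θ ≠ ⊤ →
      obeta m 1 Θᵀ ≥ ((((mbeta 1 m Θ).toReal - m) /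
        (((m : ℝ) - 1) * (mbeta 1 m Θ).toReal + m) : ℝ) : EReal)) ∧
    (mbeta 1 m Θ = ⊤ → m = 1 → obeta m 1 Θᵀ = ⊤) ∧
    (mbeta 1 m Θ = ⊤ → 2 ≤ m → obeta m 1 Θᵀ ≥ (((1 : ℝ) / ((m : ℝ) - 1) : ℝ) : EReal)) := by
  refine ⟨transferBound_mbeta_le_obeta_transpose hm, fun htop hm1 => top_le_iff.1 ?_,
    fun htop hm2 => ?_⟩
  · refine le_obeta_transpose_of_tendsto hm (eventually_lt_and_lt_mbeta_of_eq_top htop) ?_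
    simp_rw [hm1, transferBound_one]
    exact EReal.tendsto_coe_nhds_top_iff.2 (tendsto_atTop_add_const_right _ (-1) tendsto_id)
  · exact le_obeta_transpose_of_tendsto hm (eventually_lt_and_lt_mbeta_of_eq_top htop)
      ((continuous_coe_real_ereal.tendsto _).comp (tendsto_transferBound_atTop hm2))
end
end

section
/- Let n, m be positive integers and Θ a real n×m matrix. Then α_×(ᵗΘ) ≥ (n·α_×(Θ) + n − 1) / ((m−1)·α_×(Θ) + m), where if α_×(Θ) = +∞ the right-hand side is interpreted as n/(m−1) when m ≥ 2 and as +∞ when m = 1. -/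
open MeasureTheory Filter Matrix

noncomputable section

/-- For every sufficiently large t there are x ∈ ℤ^m \ {0}, y ∈ ℤ^n with
Π'(x) ≤ t and Π(Θx − y) ≤ t^{−γ}. -/
def UnifMultApprox (n m : ℕ) (Θ : Matrix (Fin n) (Fin m) ℝ) (γ : ℝ) : Prop :=
  ∀ᶠ t : ℝ in Filter.atTop, ∃ x : Fin m → ℤ, ∃ y : Fin n → ℤ, x ≠ 0 ∧
    Pigeo' (ivec x) ≤ t ∧ Pigeo (Θ.mulVec (ivec x) - ivec y) ≤ t ^ (-γ)

/-- The uniform multiplicative Diophantine exponent α_×(Θ), as an extended real. -/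
def malpha (n m : ℕ) (Θ : Matrix (Fin n) (Fin m) ℝ) : EReal :=
  sSup {x : EReal | ∃ γ : ℝ, x = (γ : EReal) ∧ UnifMultApprox n m Θ γ}

/-- For every sufficiently large t there are x ∈ ℤ^m \ {0}, y ∈ ℤ^n with
|x|_∞ ≤ t and |Θx − y|_∞ ≤ t^{−γ}. -/
def UnifOrdApprox (n m : ℕ) (Θ : Matrix (Fin n) (Fin m) ℝ) (γ : ℝ) : Prop :=
  ∀ᶠ t : ℝ in Filter.atTop, ∃ x : Fin m → ℤ, ∃ y : Fin n → ℤ, x ≠ 0 ∧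
    ‖ivec x‖ ≤ t ∧ ‖Θ.mulVec (ivec x) - ivec y‖ ≤ t ^ (-γ)

/-- The uniform (ordinary) Diophantine exponent α(Θ), as an extended real. -/
def oalpha (n m : ℕ) (Θ : Matrix (Fin n) (Fin m) ℝ) : EReal :=
  sSup {x : EReal | ∃ γ : ℝ, x = (γ : EReal) ∧ UnifOrdApprox n m Θ γ}

/-!
Mahler's transference principle: an approximation `Θ x - y = z` makes an integral combination of
the forms `Θᵀ u - v` and `u`, with coefficients `x` and `-z`. Minkowski's theorem, applied to a box
in the hyperplane where this combination vanishes, gives an integer point `(v, u)` as soon as the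
volume of the box beats the coefficients, namely when `∏ aₖ * ∏ bᵢ` exceeds `2 |xₖ| aₖ` and
`2 |zᵢ| bᵢ`. Multiplicative approximation leaves the shape of the box free: taking `aₖ = h / |xₖ|`
and `bᵢ = h / |zᵢ|`, up to corrections, turns bounds for `∏ max 1 |xₖ|` and `∏ |zᵢ|` into bounds
for `∏ |(Θᵀ u - v)ₖ|` and `∏ max 1 |uᵢ|`. With `h` a suitable power of `t`, every exponent
`γ > m / n` of `Θ` yields the exponent `(nγ + n - 1) / ((m - 1)γ + m)` of `Θᵀ`, and it remains to
let `γ` tend to the exponent of `Θ`.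
-/

section LinearForms

lemma mem_span_range_basisFun_iff {ι : Type*} [Finite ι] {v : ι → ℝ} :
    v ∈ Submodule.span ℤ (Set.range (Pi.basisFun ℝ ι)) ↔ ∃ w : ι → ℤ, Int.cast ∘ w = v := by
  simp only [(Pi.basisFun ℝ ι).mem_span_iff_repr_mem ℤ, Pi.basisFun_repr, funext_iff,
    Function.comp_apply, Set.mem_range, algebraMap_int_eq, eq_intCast]
  exact Classical.skolem

lemma setOf_abs_mulVec_le_eq_preimage {ι κ : Type*} [Fintype κ] (A : Matrix ι κ ℝ) (a : ι → ℝ) :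
    {v | ∀ i, |(A *ᵥ v) i| ≤ a i} = A.mulVecLin ⁻¹' Set.Icc (-a) a := by
  ext v
  simp [abs_le, Pi.le_def, forall_and]

lemma convex_setOf_abs_mulVec_le {ι κ : Type*} [Fintype κ] (A : Matrix ι κ ℝ) (a : ι → ℝ) :
    Convex ℝ {v | ∀ i, |(A *ᵥ v) i| ≤ a i} := by
  rw [setOf_abs_mulVec_le_eq_preimage]
  exact (convex_Icc _ _).linear_preimage _

variable {ι : Type*} [Fintype ι] {a : ι → ℝ}

lemma abs_le_card_mul_of_dotProduct_eq_zero {c t : ι → ℝ} (hct : c ⬝ᵥ t = 0) {k : ι}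
    (hck : c k ≠ 0) (hmax : ∀ l, |c l| * a l ≤ |c k| * a k) (hk : 0 ≤ a k)
    (hta : ∀ l ≠ k, |t l| ≤ a l) :
    |t k| ≤ Fintype.card ι * a k := by
  classical
  refine le_of_mul_le_mul_left ?_ (abs_pos.2 hck)
  have hsum : c k * t k = -∑ l ∈ Finset.univ.erase k, c l * t l :=
    eq_neg_of_add_eq_zero_left ((Finset.add_sum_erase _ _ (Finset.mem_univ k)).trans hct)
  calc |c k| * |t k| = |∑ l ∈ Finset.univ.erase k, c l * t l| := by
        rw [← abs_mul, hsum, abs_neg]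
    _ ≤ ∑ l ∈ Finset.univ.erase k, |c l * t l| := Finset.abs_sum_le_sum_abs _ _
    _ ≤ ∑ _l ∈ Finset.univ.erase k, |c k| * a k := by
        refine Finset.sum_le_sum fun l hl => le_trans ?_ (hmax l)
        rw [abs_mul]
        exact mul_le_mul_of_nonneg_left (hta l (Finset.ne_of_mem_erase hl)) (abs_nonneg _)
    _ ≤ ∑ _l : ι, |c k| * a k :=
        Finset.sum_le_sum_of_subset_of_nonneg (Finset.erase_subset _ _) fun _ _ _ => by positivity
    _ = |c k| * (Fintype.card ι * a k) := by
        rw [Finset.sum_const, Finset.card_univ, nsmul_eq_mul, mul_left_comm]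

variable [DecidableEq ι] {A : Matrix ι ι ℝ}

lemma volume_setOf_abs_mulVec_le (hA : A.det ≠ 0) (ha : ∀ i, 0 ≤ a i) :
    volume {v | ∀ i, |(A *ᵥ v) i| ≤ a i} = ENNReal.ofReal (|A.det|⁻¹ * ∏ i, 2 * a i) := by
  rw [setOf_abs_mulVec_le_eq_preimage, ← toLin'_apply',
    Measure.addHaar_preimage_linearMap _ (by simpa using hA), LinearMap.det_toLin', abs_inv,
    Real.volume_Icc_pi, ENNReal.ofReal_mul (by positivity),
    ENNReal.ofReal_prod_of_nonneg fun i _ => mul_nonneg zero_le_two (ha i)]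
  simp [two_mul]

lemma isCompact_setOf_abs_mulVec_le (hA : A.det ≠ 0) (a : ι → ℝ) :
    IsCompact {v | ∀ i, |(A *ᵥ v) i| ≤ a i} := by
  rw [setOf_abs_mulVec_le_eq_preimage, ← toLin'_apply']
  have : Invertible A := A.invertibleOfIsUnitDet hA.isUnit
  exact (A.toLinearEquiv' this).toContinuousLinearEquiv.toHomeomorph.isCompact_preimage.2
    isCompact_Icc

lemma exists_int_abs_mulVec_le [Nonempty ι] (hA : A.det ≠ 0) (ha : ∀ i, 0 ≤ a i)
    (hprod : |A.det| ≤ ∏ i, a i) :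
    ∃ w : ι → ℤ, w ≠ 0 ∧ ∀ i, |(A *ᵥ (Int.cast ∘ w)) i| ≤ a i := by
  let L := (Submodule.span ℤ (Set.range (Pi.basisFun ℝ ι))).toAddSubgroup
  have : Countable L :=
    inferInstanceAs (Countable (Submodule.span ℤ (Set.range (Pi.basisFun ℝ ι))))
  have : DiscreteTopology L :=
    inferInstanceAs (DiscreteTopology (Submodule.span ℤ (Set.range (Pi.basisFun ℝ ι))))
  have fund : IsAddFundamentalDomain L (ZSpan.fundamentalDomain (Pi.basisFun ℝ ι)) volume :=
    ZSpan.isAddFundamentalDomain' _ _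
  have hvol : volume (ZSpan.fundamentalDomain (Pi.basisFun ℝ ι)) *
      2 ^ Module.finrank ℝ (ι → ℝ) ≤ volume {v | ∀ i, |(A *ᵥ v) i| ≤ a i} := by
    have h2 : (2 : ENNReal) = ENNReal.ofReal 2 := by simp
    rw [volume_setOf_abs_mulVec_le hA ha, ZSpan.fundamentalDomain_pi_basisFun,
      Real.volume_pi_Ico, Module.finrank_fintype_fun_eq_card, h2,
      ← ENNReal.ofReal_pow zero_le_two, Finset.prod_mul_distrib, mul_left_comm]
    simp only [sub_zero, ENNReal.ofReal_one, Finset.prod_const_one, one_mul, Finset.prod_const,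
      Finset.card_univ]
    refine ENNReal.ofReal_le_ofReal (le_mul_of_one_le_right (by positivity) ?_)
    rwa [← div_eq_inv_mul, one_le_div (abs_pos.2 hA)]
  have hsymm : ∀ v ∈ {v | ∀ i, |(A *ᵥ v) i| ≤ a i}, -v ∈ {v | ∀ i, |(A *ᵥ v) i| ≤ a i} :=
    fun v hv i => by simpa [mulVec_neg] using hv i
  obtain ⟨⟨v, hvL⟩, hv0, hv⟩ :=
    exists_ne_zero_mem_lattice_of_measure_mul_two_pow_le_measure fund hsymm
    (convex_setOf_abs_mulVec_le A a) (isCompact_setOf_abs_mulVec_le hA a) hvol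
  obtain ⟨w, rfl⟩ := mem_span_range_basisFun_iff.1 hvL
  refine ⟨w, ?_, hv⟩
  rintro rfl
  exact hv0 (by ext; simp)

lemma det_updateRow_vecMul (A : Matrix ι ι ℝ) (c : ι → ℝ) (k : ι) :
    (A.updateRow k (c ᵥ* A)).det = c k * A.det := by
  rw [vecMul_eq_sum, det_updateRow_sum, smul_eq_mul]

/-- The form with the largest `|c k| * a k` is replaced by the integer-valued form `c ⬝ᵥ A *ᵥ w`,
which then vanishes at the point that Minkowski's theorem provides; so the dropped form is a
combination of the others. -/
lemma exists_int_abs_mulVec_le_card_mul (hA : A.det ≠ 0) (ha : ∀ i, 0 < a i) {c : ι → ℝ}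
    (hc0 : c ≠ 0) {z : ι → ℤ} (hc : c ᵥ* A = Int.cast ∘ z)
    (hprod : ∀ k, 2 * (|c k| * a k) * |A.det| ≤ ∏ i, a i) :
    ∃ w : ι → ℤ, w ≠ 0 ∧ ∀ i, |(A *ᵥ (Int.cast ∘ w)) i| ≤ Fintype.card ι * a i := by
  obtain ⟨i, hi⟩ := Function.ne_iff.1 hc0
  have : Nonempty ι := ⟨i⟩
  obtain ⟨k, hmax⟩ := Finite.exists_max fun k => |c k| * a k
  have hck : c k ≠ 0 := abs_pos.1 <|
    pos_of_mul_pos_left ((mul_pos (abs_pos.2 hi) (ha i)).trans_le (hmax i)) (ha k).le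
  have hdet : |(A.updateRow k (c ᵥ* A)).det| ≤ ∏ i, Function.update a k (1 / 2) i := by
    rw [det_updateRow_vecMul, abs_mul, Finset.prod_update_of_mem (Finset.mem_univ k)]
    have h := hprod k
    rw [← Finset.mul_prod_erase _ _ (Finset.mem_univ k), ← Finset.sdiff_singleton_eq_erase] at h
    have h' : 2 * (|c k| * |A.det|) ≤ ∏ i ∈ Finset.univ \ {k}, a i :=
      le_of_mul_le_mul_left (by linarith) (ha k)
    linarith
  obtain ⟨w, hw0, hw⟩ := exists_int_abs_mulVec_le
    (by rw [det_updateRow_vecMul]; exact mul_ne_zero hck hA)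
    (fun i => by by_cases h : i = k <;> simp [h, (ha _).le]) hdet
  have hforms : ∀ l ≠ k, |(A *ᵥ (Int.cast ∘ w)) l| ≤ a l := fun l hl => by
    simpa [mulVec, updateRow_ne hl, hl] using hw l
  have hzero : c ⬝ᵥ (A *ᵥ (Int.cast ∘ w)) = 0 := by
    have hk : |((z ⬝ᵥ w : ℤ) : ℝ)| ≤ 1 / 2 := by
      simpa [mulVec, hc, dotProduct] using hw k
    have hlt : |z ⬝ᵥ w| < 1 := by exact_mod_cast hk.trans_lt one_half_lt_one
    rw [dotProduct_mulVec, hc]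
    simpa [dotProduct] using congrArg (Int.cast : ℤ → ℝ) (Int.abs_lt_one_iff.1 hlt)
  refine ⟨w, hw0, fun l => ?_⟩
  rcases eq_or_ne l k with rfl | hl
  · exact abs_le_card_mul_of_dotProduct_eq_zero hzero hck hmax (ha l).le hforms
  · exact (hforms l hl).trans <|
      le_mul_of_one_le_left (ha l).le (by exact_mod_cast Fintype.card_pos)

end LinearForms

section ApproxForms

variable {ι κ : Type*} [Fintype κ]

/-- The error `Θ x - y` of an integer approximation `(x, y)`. -/
def approxError (Θ : Matrix ι κ ℝ) (x : κ → ℤ) (y : ι → ℤ) : ι → ℝ :=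
  Θ *ᵥ (Int.cast ∘ x) - Int.cast ∘ y

lemma approxError_zero (Θ : Matrix ι κ ℝ) (y : ι → ℤ) : approxError Θ 0 y = -(Int.cast ∘ y) := by
  have h0 : (Int.cast ∘ (0 : κ → ℤ) : κ → ℝ) = 0 := by ext; simp
  rw [approxError, h0, mulVec_zero, zero_sub]

lemma approxError_extend_val (Θ : Matrix ι κ ℝ) (J : Finset κ) (x : J → ℤ) (y : ι → ℤ) :
    approxError Θ (Function.extend Subtype.val x 0) y = approxError (Θ.submatrix id (↑)) x y := by
  ext i
  refine congrArg (· - (y i : ℝ)) (Fintype.sum_of_injective _ Subtype.val_injective _ _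
    (fun k hk => ?_) fun k => ?_).symm
  · simp [Function.extend_apply' _ _ _ hk]
  · simp

lemma ne_zero_of_abs_approxError_lt_one {Θ : Matrix ι κ ℝ} {w : ι ⊕ κ → ℤ} (hw : w ≠ 0)
    (hlt : ∀ i, |approxError Θ (w ∘ Sum.inr) (w ∘ Sum.inl) i| < 1) : w ∘ Sum.inr ≠ 0 := by
  intro hx
  refine hw (funext (Sum.rec (fun i => Int.abs_lt_one_iff.1 ?_) (congrFun hx)))
  have hi := hlt i
  rw [hx, approxError_zero, Pi.neg_apply, abs_neg] at hi
  simp only [Function.comp_apply, ← Int.cast_abs] at hi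
  exact_mod_cast hi

variable [DecidableEq ι] [DecidableEq κ]

/-- The square matrix of the linear forms `(Θ x - y, x)` in the integer variables `(y, x)`, which
encodes the approximation problem for `Θ`. -/
def approxForms (Θ : Matrix ι κ ℝ) : Matrix (ι ⊕ κ) (ι ⊕ κ) ℝ :=
  fromBlocks (-1) Θ 0 1

variable [Fintype ι]

lemma abs_det_approxForms (Θ : Matrix ι κ ℝ) : |(approxForms Θ).det| = 1 := by
  simp [approxForms, det_neg, abs_pow]

lemma det_approxForms_ne_zero (Θ : Matrix ι κ ℝ) : (approxForms Θ).det ≠ 0 := by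
  rw [← abs_pos, abs_det_approxForms]
  exact one_pos

lemma approxForms_mulVec (Θ : Matrix ι κ ℝ) (w : ι ⊕ κ → ℤ) :
    approxForms Θ *ᵥ (Int.cast ∘ w) =
      Sum.elim (approxError Θ (w ∘ Sum.inr) (w ∘ Sum.inl)) (Int.cast ∘ w ∘ Sum.inr) := by
  simp [approxForms, approxError, fromBlocks_mulVec, neg_mulVec, sub_eq_neg_add,
    Function.comp_assoc]

lemma vecMul_approxForms_transpose (Θ : Matrix ι κ ℝ) (x : κ → ℤ) (y : ι → ℤ) :
    Sum.elim (Int.cast ∘ x) (-approxError Θ x y) ᵥ* approxForms Θᵀ =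
      Int.cast ∘ Sum.elim (-x) y := by
  ext (k | i) <;> simp [approxForms, approxError, vecMul_fromBlocks, vecMul_neg, vecMul_transpose]

end ApproxForms

section Transference

variable {ι κ : Type*} [Fintype ι] [Fintype κ]

lemma exists_int_abs_approxError_le [Nonempty κ] (Θ : Matrix ι κ ℝ) {a : ι → ℝ} {b : κ → ℝ}
    (ha : ∀ i, 0 ≤ a i) (ha1 : ∀ i, a i < 1) (hb : ∀ k, 0 ≤ b k)
    (hab : 1 ≤ (∏ i, a i) * ∏ k, b k) :
    ∃ (x : κ → ℤ) (y : ι → ℤ), x ≠ 0 ∧ (∀ k, |(x k : ℝ)| ≤ b k) ∧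
      ∀ i, |approxError Θ x y i| ≤ a i := by
  classical
  obtain ⟨w, hw0, hw⟩ := exists_int_abs_mulVec_le (a := Sum.elim a b) (det_approxForms_ne_zero Θ)
    (by simp [ha, hb]) (by simpa [abs_det_approxForms] using hab)
  rw [approxForms_mulVec, Sum.forall] at hw
  exact ⟨w ∘ Sum.inr, w ∘ Sum.inl,
    ne_zero_of_abs_approxError_lt_one hw0 fun i => (hw.1 i).trans_lt (ha1 i), hw.2, hw.1⟩

/-- Mahler's transference principle. With `z = Θ x - y`, the identity
`⟨x, Θᵀ u - v⟩ - ⟨z, u⟩ = ⟨y, u⟩ - ⟨x, v⟩` exhibits a combination of the forms `(Θᵀ u - v, u)`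
that takes integer values. -/
lemma exists_int_transpose_abs_le (Θ : Matrix ι κ ℝ) {x : κ → ℤ} (hx : x ≠ 0) (y : ι → ℤ)
    {a : κ → ℝ} {b : ι → ℝ} (ha : ∀ k, 0 < a k) (hb : ∀ i, 0 < b i)
    (ha1 : ∀ k, (Fintype.card κ + Fintype.card ι) * a k < 1)
    (hxa : ∀ k, 2 * (|(x k : ℝ)| * a k) ≤ (∏ k, a k) * ∏ i, b i)
    (hyb : ∀ i, 2 * (|approxError Θ x y i| * b i) ≤ (∏ k, a k) * ∏ i, b i) :
    ∃ (u : ι → ℤ) (v : κ → ℤ), u ≠ 0 ∧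
      (∀ i, |(u i : ℝ)| ≤ (Fintype.card κ + Fintype.card ι) * b i) ∧
      ∀ k, |approxError Θᵀ u v k| ≤ (Fintype.card κ + Fintype.card ι) * a k := by
  classical
  have hc0 : Sum.elim (Int.cast ∘ x) (-approxError Θ x y) ≠ 0 := fun h =>
    hx (funext fun k => by simpa using congrFun h (Sum.inl k))
  obtain ⟨w, hw0, hw⟩ := exists_int_abs_mulVec_le_card_mul (a := Sum.elim a b)
    (det_approxForms_ne_zero Θᵀ) (by simp [ha, hb]) hc0 (vecMul_approxForms_transpose Θ x y)
    (by simpa [abs_det_approxForms, Fintype.prod_sum_type] using ⟨hxa, hyb⟩)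
  rw [approxForms_mulVec, Sum.forall, Fintype.card_sum, Nat.cast_add] at hw
  exact ⟨w ∘ Sum.inr, w ∘ Sum.inl,
    ne_zero_of_abs_approxError_lt_one hw0 fun k => (hw.1 k).trans_lt (ha1 k), hw.2, hw.1⟩

lemma exists_int_transpose_abs_le_of_finset (Θ : Matrix ι κ ℝ) (J : Finset ι) {x : κ → ℤ}
    (hx : x ≠ 0) (y : ι → ℤ) {a : κ → ℝ} {b : ι → ℝ} (ha : ∀ k, 0 < a k)
    (hb : ∀ i ∈ J, 0 < b i) (ha1 : ∀ k, (Fintype.card κ + J.card) * a k < 1)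
    (hxa : ∀ k, 2 * (|(x k : ℝ)| * a k) ≤ (∏ k, a k) * ∏ i ∈ J, b i)
    (hyb : ∀ i ∈ J, 2 * (|approxError Θ x y i| * b i) ≤ (∏ k, a k) * ∏ i ∈ J, b i) :
    ∃ (u : ι → ℤ) (v : κ → ℤ), u ≠ 0 ∧ (∀ i ∉ J, u i = 0) ∧
      (∀ i ∈ J, |(u i : ℝ)| ≤ (Fintype.card κ + J.card) * b i) ∧
      ∀ k, |approxError Θᵀ u v k| ≤ (Fintype.card κ + J.card) * a k := by
  rw [← Finset.prod_coe_sort J b] at hxa hyb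
  rw [← Fintype.card_coe J] at ha1 ⊢
  obtain ⟨u, v, hu0, hu, hv⟩ := exists_int_transpose_abs_le (Θ.submatrix ((↑) : J → ι) id) hx
    (fun i : J => y i) ha (fun i => hb i i.2) ha1 hxa fun i => hyb i i.2
  have hext : ∀ i : J, Function.extend Subtype.val u 0 (i : ι) = u i :=
    Subtype.val_injective.extend_apply u 0
  refine ⟨Function.extend Subtype.val u 0, v, fun h => hu0 (funext fun i => ?_),
    fun i hi => ?_, fun i hi => ?_, ?_⟩
  · rw [← hext, h]
    rfl
  · exact Function.extend_apply' _ _ _ (by simpa using hi)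
  · rw [hext ⟨i, hi⟩]
    exact hu ⟨i, hi⟩
  · rwa [approxError_extend_val]

end Transference

section Products

variable {ι : Type*}

lemma exists_ge_prod_eq (s : Finset ι) {N : ι → ℝ} (hN : ∀ i ∈ s, 0 ≤ N i) {C P : ℝ}
    (hC : 0 ≤ C) (hNP : ∏ i ∈ s, N i ≤ P) (hPC : P ≤ C ^ s.card) :
    ∃ R : ι → ℝ, (∀ i, N i ≤ R i ∧ R i ≤ max (N i) C) ∧ ∏ i ∈ s, R i = P := by
  have hcont : Continuous fun r : ℝ => ∏ i ∈ s, max (N i) r := by fun_prop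
  have h0 : ∏ i ∈ s, max (N i) 0 ≤ P := by
    rwa [Finset.prod_congr rfl fun i hi => max_eq_left (hN i hi)]
  have h1 : P ≤ ∏ i ∈ s, max (N i) C := by
    rw [← Finset.prod_const] at hPC
    exact hPC.trans (Finset.prod_le_prod (fun _ _ => hC) fun _ _ => le_max_right _ _)
  obtain ⟨r, ⟨-, hr⟩, hP⟩ := intermediate_value_Icc hC hcont.continuousOn ⟨h0, h1⟩
  exact ⟨fun i => max (N i) r, fun i => ⟨le_max_left _ _, max_le_max_left _ hr⟩, hP⟩

variable [Fintype ι]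

lemma prod_filter_le_one_le_prod {N : ι → ℝ} (hN : ∀ i, 0 ≤ N i) :
    ∏ i with N i ≤ 1, N i ≤ ∏ i, N i := by
  rw [Finset.prod_filter]
  refine Finset.prod_le_prod (fun i _ => ?_) fun i _ => ?_ <;> split_ifs with hi
  exacts [hN i, zero_le_one, le_rfl, (not_le.1 hi).le]

lemma prod_max_one_abs_le {z b : ι → ℝ} {J : Finset ι} {d : ℝ} (hd : 1 ≤ d)
    (hb : ∀ i ∈ J, 1 ≤ b i) (hz : ∀ i ∈ J, |z i| ≤ d * b i) (hz0 : ∀ i ∉ J, z i = 0) :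
    ∏ i, max 1 |z i| ≤ d ^ Fintype.card ι * ∏ i ∈ J, b i := by
  have hJ : ∏ i, max 1 |z i| = ∏ i ∈ J, max 1 |z i| :=
    (Finset.prod_subset (Finset.subset_univ J) fun i _ hi => by simp [hz0 i hi]).symm
  have hprod : 0 ≤ ∏ i ∈ J, b i := Finset.prod_nonneg fun i hi => zero_le_one.trans (hb i hi)
  calc ∏ i, max 1 |z i| ≤ ∏ i ∈ J, d * b i := hJ.trans_le <|
        Finset.prod_le_prod (fun _ _ => by positivity) fun i hi =>
          max_le (one_le_mul_of_one_le_of_one_le hd (hb i hi)) (hz i hi)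
    _ = d ^ J.card * ∏ i ∈ J, b i := by rw [Finset.prod_mul_distrib, Finset.prod_const]
    _ ≤ d ^ Fintype.card ι * ∏ i ∈ J, b i := by
        gcongr
        exact J.card_le_univ

end Products

section MultiplicativeTransference

variable {ι κ : Type*} [Fintype ι] [Fintype κ]

lemma exists_int_transpose_prod_le_of_finset (Θ : Matrix ι κ ℝ) (J : Finset ι) {x : κ → ℤ}
    (hx : x ≠ 0) (y : ι → ℤ) {h : ℝ} (hh : 0 < h)
    (hh1 : (Fintype.card κ + Fintype.card ι) * h < 1) {q : κ → ℝ} (hq1 : ∀ k, 1 ≤ q k)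
    (hxq : ∀ k, |(x k : ℝ)| ≤ q k) {R : ι → ℝ} (hR0 : ∀ i ∈ J, 0 < R i)
    (hR1 : ∀ i ∈ J, R i ≤ 1) (hyR : ∀ i ∈ J, |approxError Θ x y i| ≤ h * R i)
    (hvol : 2 * h * ((∏ k, q k) * ∏ i ∈ J, R i) ≤ h ^ Fintype.card κ) :
    ∃ (u : ι → ℤ) (v : κ → ℤ), u ≠ 0 ∧
      ∏ i, max 1 |(u i : ℝ)| ≤
        (Fintype.card κ + Fintype.card ι) ^ Fintype.card ι / ∏ i ∈ J, R i ∧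
      ∏ k, |approxError Θᵀ u v k| ≤
        ((Fintype.card κ + Fintype.card ι) * h) ^ Fintype.card κ / ∏ k, q k := by
  obtain ⟨k₀, -⟩ := Function.ne_iff.1 hx
  have : Nonempty κ := ⟨k₀⟩
  have hq0 : ∀ k, 0 < q k := fun k => one_pos.trans_le (hq1 k)
  have hbox : 2 * h ≤ (∏ k, h / q k) * ∏ i ∈ J, (R i)⁻¹ := by
    rw [Finset.prod_div_distrib, Finset.prod_const, Finset.card_univ, Finset.prod_inv_distrib,
      ← div_eq_mul_inv, div_div, le_div_iff₀
        (mul_pos (Finset.prod_pos fun k _ => hq0 k) (Finset.prod_pos hR0))]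
    exact hvol
  have hd : (Fintype.card κ + J.card : ℝ) ≤ Fintype.card κ + Fintype.card ι := by
    gcongr
    exact J.card_le_univ
  have hd1 : (1 : ℝ) ≤ Fintype.card κ + Fintype.card ι :=
    le_add_of_le_of_nonneg (by exact_mod_cast Fintype.card_pos) (Nat.cast_nonneg _)
  obtain ⟨u, v, hu0, huJ, hu, hv⟩ := exists_int_transpose_abs_le_of_finset Θ J hx y
    (a := fun k => h / q k) (b := fun i => (R i)⁻¹) (fun k => div_pos hh (hq0 k))
    (fun i hi => inv_pos.2 (hR0 i hi))
    (fun k => hh1.trans_le' <|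
      mul_le_mul hd (div_le_self hh.le (hq1 k)) (div_pos hh (hq0 k)).le (by positivity))
    (fun k => hbox.trans' <| by
      rw [mul_div_left_comm]
      gcongr
      exact mul_le_of_le_one_right hh.le (div_le_one_of_le₀ (hxq k) (hq0 k).le))
    (fun i hi => hbox.trans' <| by
      rw [← div_eq_mul_inv]
      gcongr
      exact (div_le_iff₀ (hR0 i hi)).2 (hyR i hi))
  refine ⟨u, v, hu0, ?_, ?_⟩
  · rw [div_eq_mul_inv, ← Finset.prod_inv_distrib]
    refine prod_max_one_abs_le hd1 (fun i hi => (one_le_inv₀ (hR0 i hi)).2 (hR1 i hi))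
      (fun i hi => (hu i hi).trans ?_) fun i hi => by simp [huJ i hi]
    exact mul_le_mul_of_nonneg_right hd (inv_nonneg.2 (hR0 i hi).le)
  · calc ∏ k, |approxError Θᵀ u v k| ≤ ∏ k, (Fintype.card κ + Fintype.card ι) * h / q k :=
          Finset.prod_le_prod (fun _ _ => abs_nonneg _) fun k _ => (hv k).trans <|
            (mul_le_mul_of_nonneg_right hd (div_pos hh (hq0 k)).le).trans_eq
              (mul_div_assoc _ _ _).symm
      _ = _ := by rw [Finset.prod_div_distrib, Finset.prod_const, Finset.card_univ]

/-- A coordinate of `Θ x - y` exceeding `h` would make the box thinner than `1` in the direction of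
`u i`, which does not help to bound `max 1 |u i|`. So `u i` is taken to be `0` there, and only the
coordinates with `|Θ x - y| ≤ h` enter the volume. -/
lemma exists_int_transpose_prod_le (Θ : Matrix ι κ ℝ) {x : κ → ℤ} (hx : x ≠ 0) (y : ι → ℤ)
    {h P Q : ℝ} (hh : 0 < h) (hh1 : (Fintype.card κ + Fintype.card ι) * h < 1) (hP : 0 < P)
    (hP1 : P ≤ 1) (hvol : 2 * h * (Q * P) ≤ h ^ Fintype.card κ)
    (hxQ : ∏ k, max 1 |(x k : ℝ)| ≤ Q) (hyP : ∏ i, |approxError Θ x y i| / h ≤ P) :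
    ∃ (u : ι → ℤ) (v : κ → ℤ), u ≠ 0 ∧
      ∏ i, max 1 |(u i : ℝ)| ≤ (Fintype.card κ + Fintype.card ι) ^ Fintype.card ι / P ∧
      ∏ k, |approxError Θᵀ u v k| ≤
        ((Fintype.card κ + Fintype.card ι) * h) ^ Fintype.card κ / Q := by
  obtain ⟨k₀, -⟩ := Function.ne_iff.1 hx
  have : Nonempty κ := ⟨k₀⟩
  have hQ1 : 1 ≤ Q := hxQ.trans' <| Finset.one_le_prod fun _ _ => le_max_left _ _
  obtain ⟨q, hq, rfl⟩ := exists_ge_prod_eq Finset.univ (fun k _ => by positivity)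
    (zero_le_one.trans hQ1) hxQ (le_self_pow₀ hQ1 Fintype.card_ne_zero)
  let N : ι → ℝ := fun i => |approxError Θ x y i| / h
  let J : Finset ι := {i | N i ≤ 1}
  obtain ⟨R, hR, rfl⟩ := exists_ge_prod_eq J (N := N) (fun i _ => by positivity) zero_le_one
    ((prod_filter_le_one_le_prod fun i => by positivity).trans hyP) (by simpa using hP1)
  refine exists_int_transpose_prod_le_of_finset Θ J hx y hh hh1
    (fun k => (le_max_left _ _).trans (hq k).1) (fun k => (le_max_right _ _).trans (hq k).1)
    (fun i hi => ?_) (fun i hi => ?_) (fun i _ => ?_) hvol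
  · exact lt_of_le_of_ne' ((by positivity : 0 ≤ N i).trans (hR i).1)
      (Finset.prod_ne_zero_iff.1 hP.ne' i hi)
  · exact (hR i).2.trans (max_le (Finset.mem_filter.1 hi).2 le_rfl)
  · exact (div_le_iff₀' hh).1 (hR i).1

end MultiplicativeTransference

section GeometricMeans

variable {k : ℕ}

lemma rpow_one_div_le_iff_le_pow (hk : 0 < k) {P T : ℝ} (hP : 0 ≤ P) (hT : 0 ≤ T) :
    P ^ ((1 : ℝ) / k) ≤ T ↔ P ≤ T ^ k := by
  rw [one_div, Real.rpow_inv_le_iff_of_pos hP hT (by exact_mod_cast hk), Real.rpow_natCast]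

lemma pigeo_le_iff (hk : 0 < k) {z : Fin k → ℝ} {T : ℝ} (hT : 0 ≤ T) :
    Pigeo z ≤ T ↔ ∏ i, |z i| ≤ T ^ k :=
  rpow_one_div_le_iff_le_pow hk (Finset.prod_nonneg fun _ _ => abs_nonneg _) hT

lemma pigeo'_le_iff (hk : 0 < k) {z : Fin k → ℝ} {T : ℝ} (hT : 0 ≤ T) :
    Pigeo' z ≤ T ↔ ∏ i, max 1 |z i| ≤ T ^ k :=
  rpow_one_div_le_iff_le_pow hk (Finset.prod_nonneg fun _ _ => by positivity) hT

lemma pigeo_le_of_forall_abs_le (hk : 0 < k) {z : Fin k → ℝ} {T : ℝ} (hT : 0 ≤ T)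
    (hz : ∀ i, |z i| ≤ T) : Pigeo z ≤ T :=
  (pigeo_le_iff hk hT).2 <|
    (Finset.prod_le_prod (fun _ _ => abs_nonneg _) fun i _ => hz i).trans_eq (by simp)

lemma pigeo'_le_of_forall_abs_le (hk : 0 < k) {z : Fin k → ℝ} {T : ℝ} (hT : 1 ≤ T)
    (hz : ∀ i, |z i| ≤ T) : Pigeo' z ≤ T :=
  (pigeo'_le_iff hk (zero_le_one.trans hT)).2 <|
    (Finset.prod_le_prod (fun _ _ => by positivity) fun i _ => max_le hT (hz i)).trans_eq (by simp)

lemma exists_int_pigeo_transpose_le {n m : ℕ} (hn : 0 < n) (hm : 0 < m)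
    (Θ : Matrix (Fin n) (Fin m) ℝ) {x : Fin m → ℤ} (hx : x ≠ 0) (y : Fin n → ℤ) {X U h : ℝ}
    (hX : 0 < X) (hU : 0 < U) (hUh : U ≤ h) (hh1 : (m + n) * h < 1)
    (hvol : 2 * h * (X ^ m * U ^ n) ≤ h ^ (m + n)) (hxX : Pigeo' (ivec x) ≤ X)
    (hyU : Pigeo (Θ *ᵥ ivec x - ivec y) ≤ U) :
    ∃ (u : Fin n → ℤ) (v : Fin m → ℤ), u ≠ 0 ∧ Pigeo' (ivec u) ≤ (m + n) * (h / U) ∧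
      Pigeo (Θᵀ *ᵥ ivec u - ivec v) ≤ (m + n) * (h / X) := by
  have hh : 0 < h := hU.trans_le hUh
  have hyP : ∏ i, |approxError Θ x y i| / h ≤ (U / h) ^ n := by
    rw [Finset.prod_div_distrib, div_pow, Finset.prod_const, Finset.card_univ, Fintype.card_fin]
    gcongr
    exact (pigeo_le_iff hn hU.le).1 hyU
  have hvol' : 2 * h * (X ^ m * (U / h) ^ n) ≤ h ^ m := by
    rw [div_pow, mul_div_assoc', mul_div_assoc', div_le_iff₀ (by positivity), ← pow_add]
    exact hvol
  obtain ⟨u, v, hu0, hu, hv⟩ := exists_int_transpose_prod_le Θ hx y hh (by simpa using hh1)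
    (pow_pos (div_pos hU hh) n) (pow_le_one₀ (by positivity) ((div_le_one hh).2 hUh))
    (by simpa using hvol') ((pigeo'_le_iff hm hX.le).1 hxX) hyP
  refine ⟨u, v, hu0, (pigeo'_le_iff hn (by positivity)).2 (hu.trans_eq ?_),
    (pigeo_le_iff hm (by positivity)).2 (hv.trans_eq ?_)⟩
  · simp only [Fintype.card_fin]
    rw [← div_pow, div_div_eq_mul_div, mul_div_assoc]
  · simp only [Fintype.card_fin]
    rw [← div_pow, mul_div_assoc]

end GeometricMeans

section UniformExponent

variable {n m : ℕ} {Θ : Matrix (Fin n) (Fin m) ℝ} {γ : ℝ}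

lemma UnifMultApprox.of_le {γ' : ℝ} (h : UnifMultApprox n m Θ γ) (hγ : γ' ≤ γ) :
    UnifMultApprox n m Θ γ' := by
  filter_upwards [h, eventually_ge_atTop 1] with t ⟨x, y, hx, hxt, hyt⟩ ht
  exact ⟨x, y, hx, hxt, hyt.trans (Real.rpow_le_rpow_of_exponent_le ht (neg_le_neg hγ))⟩

lemma eventually_mul_rpow_le_rpow {D p q β : ℝ} (hD : 0 < D) (hβ : β * p < q) :
    ∀ᶠ t : ℝ in atTop, D * t ^ (-q) ≤ (D * t ^ p) ^ (-β) := by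
  filter_upwards [(tendsto_rpow_atTop (sub_pos.2 hβ)).eventually_ge_atTop (D ^ (1 + β)),
    eventually_gt_atTop 0] with t ht ht0
  calc D * t ^ (-q) = D ^ (-β) * (D ^ (1 + β) * t ^ (-q)) := by
        rw [← mul_assoc, ← Real.rpow_add hD]
        simp
    _ ≤ D ^ (-β) * (t ^ (q - β * p) * t ^ (-q)) := by gcongr
    _ = (D * t ^ p) ^ (-β) := by
        rw [Real.mul_rpow hD.le (by positivity), ← Real.rpow_mul ht0.le, ← Real.rpow_add ht0]
        ring_nf

lemma UnifMultApprox.of_eventually_rpow {D p q β : ℝ} (hD : 0 < D) (hp : 0 < p) (hβ : β * p < q)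
    (h : ∀ᶠ t : ℝ in atTop, ∃ (x : Fin m → ℤ) (y : Fin n → ℤ), x ≠ 0 ∧
      Pigeo' (ivec x) ≤ D * t ^ p ∧ Pigeo (Θ *ᵥ ivec x - ivec y) ≤ D * t ^ (-q)) :
    UnifMultApprox n m Θ β := by
  have htend : Tendsto (fun T : ℝ => (T / D) ^ p⁻¹) atTop atTop :=
    (tendsto_rpow_atTop (inv_pos.2 hp)).comp (tendsto_id.atTop_div_const hD)
  filter_upwards [htend.eventually (h.and (eventually_mul_rpow_le_rpow hD hβ)),
    eventually_gt_atTop 0] with T ⟨⟨x, y, hx, hxT, hyT⟩, hle⟩ hT0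
  have hT : D * ((T / D) ^ p⁻¹) ^ p = T := by
    rw [Real.rpow_inv_rpow (by positivity) hp.ne', mul_div_cancel₀ _ hD.ne']
  rw [hT] at hxT hle
  exact ⟨x, y, hx, hxT, hyT.trans hle⟩

lemma unifMultApprox_div (hn : 0 < n) (hm : 0 < m) (Θ : Matrix (Fin n) (Fin m) ℝ) :
    UnifMultApprox n m Θ (m / n) := by
  have hn0 : (0 : ℝ) < n := by exact_mod_cast hn
  have hm0 : (0 : ℝ) < m := by exact_mod_cast hm
  have : Nonempty (Fin m) := ⟨⟨0, hm⟩⟩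
  filter_upwards [eventually_gt_atTop 1] with t ht
  have ht0 : 0 < t := one_pos.trans ht
  have hvol : (t ^ (-(m / n : ℝ))) ^ n * t ^ m = 1 := by
    rw [← Real.rpow_mul_natCast ht0.le, neg_mul, div_mul_cancel₀ _ hn0.ne', Real.rpow_neg ht0.le,
      Real.rpow_natCast, inv_mul_cancel₀ (by positivity)]
  obtain ⟨x, y, hx, hxt, hyt⟩ := exists_int_abs_approxError_le Θ
    (a := fun _ => t ^ (-(m / n : ℝ))) (b := fun _ => t) (fun _ => by positivity)
    (fun _ => Real.rpow_lt_one_of_one_lt_of_neg ht (neg_neg_of_pos (div_pos hm0 hn0)))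
    (fun _ => ht0.le) (by simp [hvol])
  exact ⟨x, y, hx, pigeo'_le_of_forall_abs_le hm ht.le hxt,
    pigeo_le_of_forall_abs_le hn (by positivity) hyt⟩

lemma two_mul_two_mul_rpow_mul_le_pow (hn : 0 < n) (hm : 0 < m) {t r : ℝ} (ht : 0 < t)
    (hr : r * (m + n - 1) = n * γ - m) :
    2 * (2 * t ^ (-r)) * (t ^ m * (t ^ (-γ)) ^ n) ≤ (2 * t ^ (-r)) ^ (m + n) := by
  have hexp : t ^ (-r) * (t ^ m * (t ^ (-γ)) ^ n) = (t ^ (-r)) ^ (m + n) := by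
    simp only [← Real.rpow_natCast, ← Real.rpow_mul ht.le, ← Real.rpow_add ht]
    congr 1
    push_cast
    linarith
  rw [mul_pow, ← hexp, ← mul_assoc 2, mul_assoc (2 * 2)]
  gcongr
  calc (2 * 2 : ℝ) = 2 ^ 2 := by norm_num
    _ ≤ 2 ^ (m + n) := pow_le_pow_right₀ one_le_two (by omega)

/-- The exponent `r` is chosen so that the box of the transference lemma with `h = 2 t ^ (-r)` is
just large enough for points with `Π' ≤ t` and `Π ≤ t ^ (-γ)`. -/
lemma UnifMultApprox.eventually_transpose (hn : 0 < n) (hm : 0 < m) (h : UnifMultApprox n m Θ γ)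
    {r : ℝ} (hr0 : 0 < r) (hrγ : r ≤ γ) (hr : r * (m + n - 1) = n * γ - m) :
    ∀ᶠ t : ℝ in atTop, ∃ (u : Fin n → ℤ) (v : Fin m → ℤ), u ≠ 0 ∧
      Pigeo' (ivec u) ≤ 2 * (m + n) * t ^ (γ - r) ∧
      Pigeo (Θᵀ *ᵥ ivec u - ivec v) ≤ 2 * (m + n) * t ^ (-(1 + r)) := by
  filter_upwards [h, eventually_ge_atTop 1,
    (tendsto_rpow_atTop hr0).eventually_gt_atTop ((m + n) * 2)] with t ⟨x, y, hx, hxt, hyt⟩ ht1 htr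
  have ht0 : 0 < t := one_pos.trans_le ht1
  have hUh : t ^ (-γ) ≤ 2 * t ^ (-r) :=
    (Real.rpow_le_rpow_of_exponent_le ht1 (neg_le_neg hrγ)).trans
      (le_mul_of_one_le_left (by positivity) one_le_two)
  have hh1 : (m + n) * (2 * t ^ (-r)) < 1 := by
    rwa [← mul_assoc, Real.rpow_neg ht0.le, ← div_eq_mul_inv, div_lt_one (by positivity)]
  obtain ⟨u, v, hu, hut, hvt⟩ := exists_int_pigeo_transpose_le hn hm Θ hx y ht0
    (Real.rpow_pos_of_pos ht0 (-γ)) hUh hh1 (two_mul_two_mul_rpow_mul_le_pow hn hm ht0 hr) hxt hyt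
  refine ⟨u, v, hu, hut.trans_eq ?_, hvt.trans_eq ?_⟩
  · rw [mul_div_assoc, ← Real.rpow_sub ht0]
    ring_nf
  · rw [mul_div_assoc, ← Real.rpow_sub_one ht0.ne']
    ring_nf

lemma UnifMultApprox.transpose (hn : 0 < n) (hm : 0 < m) (h : UnifMultApprox n m Θ γ)
    (hγ : (m : ℝ) / n < γ) {β : ℝ} (hβ : β * ((m - 1) * γ + m) < n * γ + n - 1) :
    UnifMultApprox m n Θᵀ β := by
  have hn1 : (1 : ℝ) ≤ n := by exact_mod_cast hn
  have hm1 : (1 : ℝ) ≤ m := by exact_mod_cast hm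
  have hd : (0 : ℝ) < m + n - 1 := by linarith
  have hγ0 : 0 < γ := hγ.trans' (by positivity)
  rw [div_lt_iff₀' (by linarith)] at hγ
  obtain ⟨r, hr⟩ : ∃ r : ℝ, r * (m + n - 1) = n * γ - m := ⟨_, div_mul_cancel₀ _ hd.ne'⟩
  have hr0 : 0 < r := pos_of_mul_pos_left (hr ▸ sub_pos.2 hγ) hd.le
  have hp : (γ - r) * (m + n - 1) = (m - 1) * γ + m := by linarith
  have hq : (1 + r) * (m + n - 1) = n * γ + n - 1 := by linarith
  have hp0 : 0 < γ - r := pos_of_mul_pos_left (hp ▸ by nlinarith) hd.le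
  rw [← hp, ← hq, ← mul_assoc] at hβ
  exact .of_eventually_rpow (by positivity) hp0 (lt_of_mul_lt_mul_right hβ hd.le)
    (h.eventually_transpose hn hm hr0 (sub_pos.1 hp0).le hr)

lemma le_malpha (h : UnifMultApprox n m Θ γ) : (γ : EReal) ≤ malpha n m Θ :=
  le_sSup ⟨γ, rfl, h⟩

lemma div_le_malpha (hn : 0 < n) (hm : 0 < m) (Θ : Matrix (Fin n) (Fin m) ℝ) :
    ((m / n : ℝ) : EReal) ≤ malpha n m Θ :=
  le_malpha (unifMultApprox_div hn hm Θ)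

lemma unifMultApprox_of_lt_malpha (h : (γ : EReal) < malpha n m Θ) : UnifMultApprox n m Θ γ := by
  obtain ⟨_, ⟨γ', rfl, hγ'⟩, hlt⟩ := lt_sSup_iff.1 h
  exact hγ'.of_le (EReal.coe_lt_coe_iff.1 hlt).le

lemma coe_le_malpha_of_forall_lt {b : ℝ} (h : ∀ β < b, UnifMultApprox n m Θ β) :
    (b : EReal) ≤ malpha n m Θ :=
  EReal.ge_of_forall_gt_iff_ge.1 fun z hz => le_malpha (h z (EReal.coe_lt_coe_iff.1 hz))

end UniformExponent

section DysonBound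

open scoped Topology

variable {n m : ℕ}

/-- Dyson's lower bound for the exponent of `Θᵀ` in terms of an exponent `γ` of `Θ`. -/
def dysonBound (n m : ℕ) (γ : ℝ) : ℝ := (n * γ + n - 1) / ((m - 1) * γ + m)

lemma dysonBound_denom_pos (hm : 0 < m) {γ : ℝ} (hγ : 0 ≤ γ) : 0 < ((m : ℝ) - 1) * γ + m := by
  have hm1 : (1 : ℝ) ≤ m := by exact_mod_cast hm
  have := mul_nonneg (sub_nonneg.2 hm1) hγ
  linarith

lemma dysonBound_div (hn : 0 < n) (hm : 0 < m) : dysonBound n m (m / n) = n / m := by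
  have hn0 : (n : ℝ) ≠ 0 := by positivity
  have hm0 : (m : ℝ) ≠ 0 := by positivity
  rw [dysonBound, div_eq_div_iff (dysonBound_denom_pos hm (by positivity)).ne' hm0]
  field_simp
  ring

lemma dysonBound_one (n : ℕ) (γ : ℝ) : dysonBound n 1 γ = n * γ + n - 1 := by
  simp [dysonBound]

lemma continuousAt_dysonBound (hm : 0 < m) {γ : ℝ} (hγ : 0 ≤ γ) :
    ContinuousAt (dysonBound n m) γ :=
  ContinuousAt.div (by fun_prop) (by fun_prop) (dysonBound_denom_pos hm hγ).ne'

lemma tendsto_dysonBound_one_atTop (hn : 0 < n) : Tendsto (dysonBound n 1) atTop atTop := by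
  have hlin : Tendsto (fun γ : ℝ => n * γ + (n - 1)) atTop atTop :=
    tendsto_atTop_add_const_right _ _ (tendsto_id.const_mul_atTop (by positivity))
  exact hlin.congr fun γ => by rw [dysonBound_one, add_sub_assoc]

lemma tendsto_dysonBound_atTop (hm : 2 ≤ m) :
    Tendsto (dysonBound n m) atTop (𝓝 (n / (m - 1))) := by
  have hm2 : (2 : ℝ) ≤ m := by exact_mod_cast hm
  have hlim : Tendsto (fun γ : ℝ => (n + (n - 1) / γ) / ((m - 1) + m / γ)) atTop
      (𝓝 ((n + 0) / ((m - 1) + 0))) :=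
    (tendsto_const_nhds.add (tendsto_id.const_div_atTop _)).div
      (tendsto_const_nhds.add (tendsto_id.const_div_atTop _)) (by linarith)
  rw [add_zero, add_zero] at hlim
  refine hlim.congr' ?_
  filter_upwards [eventually_gt_atTop 0] with γ hγ
  rw [dysonBound, ← mul_div_mul_right _ _ hγ.ne', add_mul, add_mul, div_mul_cancel₀ _ hγ.ne',
    div_mul_cancel₀ _ hγ.ne', add_sub_assoc]

variable {Θ : Matrix (Fin n) (Fin m) ℝ}

lemma dysonBound_le_malpha_transpose (hn : 0 < n) (hm : 0 < m) {γ : ℝ} (hγ : (m : ℝ) / n < γ)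
    (hγα : γ < malpha n m Θ) : (dysonBound n m γ : EReal) ≤ malpha m n Θᵀ :=
  coe_le_malpha_of_forall_lt fun _ hβ => (unifMultApprox_of_lt_malpha hγα).transpose hn hm hγ <|
    (lt_div_iff₀ (dysonBound_denom_pos hm (hγ.le.trans' (by positivity)))).1 hβ

lemma le_malpha_transpose_of_tendsto (hn : 0 < n) (hm : 0 < m) {l : Filter ℝ} [l.NeBot] {b : EReal}
    (hlim : Tendsto (fun γ => (dysonBound n m γ : EReal)) l (𝓝 b))
    (hl : ∀ᶠ γ in l, (m : ℝ) / n < γ) (hα : ∀ᶠ γ : ℝ in l, (γ : EReal) < malpha n m Θ) :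
    b ≤ malpha m n Θᵀ :=
  le_of_tendsto hlim <| (hl.and hα).mono fun _ hγ =>
    dysonBound_le_malpha_transpose hn hm hγ.1 hγ.2

lemma dysonBound_le_malpha_transpose_of_eq (hn : 0 < n) (hm : 0 < m) {a : ℝ}
    (ha : malpha n m Θ = a) : (dysonBound n m a : EReal) ≤ malpha m n Θᵀ := by
  have hdir : (m : ℝ) / n ≤ a := EReal.coe_le_coe_iff.1 (ha ▸ div_le_malpha hn hm Θ)
  rcases hdir.eq_or_lt with rfl | hlt
  · rw [dysonBound_div hn hm]
    exact div_le_malpha hm hn Θᵀ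
  · have hcont := continuousAt_dysonBound (n := n) hm (hdir.trans' (by positivity))
    refine le_malpha_transpose_of_tendsto hn hm (l := 𝓝[<] a)
      (EReal.tendsto_coe.2 hcont.continuousWithinAt) ?_ ?_
    · exact nhdsWithin_le_nhds (eventually_gt_nhds hlt)
    · filter_upwards [self_mem_nhdsWithin] with γ hγ
      rw [ha]
      exact EReal.coe_lt_coe_iff.2 hγ

lemma le_malpha_transpose_of_tendsto_atTop (hn : 0 < n) (hm : 0 < m) (htop : malpha n m Θ = ⊤)
    {b : EReal} (hlim : Tendsto (fun γ => (dysonBound n m γ : EReal)) atTop (𝓝 b)) :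
    b ≤ malpha m n Θᵀ :=
  le_malpha_transpose_of_tendsto hn hm hlim (eventually_gt_atTop _) <|
    .of_forall fun γ => htop ▸ EReal.coe_lt_top γ

end DysonBound

/-- Corollary 7: α_×(ᵗΘ) ≥ (n α_×(Θ) + n − 1)/((m−1) α_×(Θ) + m), where for
α_×(Θ) = +∞ the right-hand side is read as n/(m−1) if m ≥ 2, and as +∞ if m = 1. -/
theorem malpha_transpose_dyson (n m : ℕ) (hn : 0 < n) (hm : 0 < m)
    (Θ : Matrix (Fin n) (Fin m) ℝ) :
    (malpha n m Θ ≠ ⊤ →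
      malpha m n Θᵀ ≥ ((((n : ℝ) * (malpha n m Θ).toReal + n - 1) /
        (((m : ℝ) - 1) * (malpha n m Θ).toReal + m) : ℝ) : EReal)) ∧
    (malpha n m Θ = ⊤ → m = 1 → malpha m n Θᵀ = ⊤) ∧
    (malpha n m Θ = ⊤ → 2 ≤ m → malpha m n Θᵀ ≥ (((n : ℝ) / ((m : ℝ) - 1) : ℝ) : EReal)) := by
  refine ⟨fun htop => ?_, fun htop h1 => ?_, fun htop h2 => ?_⟩
  · have hbot : malpha n m Θ ≠ ⊥ := ne_bot_of_le_ne_bot (EReal.coe_ne_bot _) (div_le_malpha hn hm Θ)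
    exact dysonBound_le_malpha_transpose_of_eq hn hm (EReal.coe_toReal htop hbot).symm
  · subst h1
    exact top_le_iff.1 <| le_malpha_transpose_of_tendsto_atTop hn hm htop <|
      EReal.tendsto_coe_nhds_top_iff.2 (tendsto_dysonBound_one_atTop hn)
  · exact le_malpha_transpose_of_tendsto_atTop hn hm htop <|
      EReal.tendsto_coe.2 (tendsto_dysonBound_atTop h2)
end
end
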